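/- Let G be an amenable group and k a positive integer. If A ⊆ G is piecewise k-syndetic, then the Banach density of A satisfies d(A) ≥ 1/k. -/

import Mathlib

/-!
Let `F` be a set of at most `k` elements with `F * A` thick. Given `H` and `ε`, amenability provides
a `K` that is `ε`-invariant under all conjugates `f h f⁻¹` with `f ∈ F`, `h ∈ H`. By thickness
`K x ⊆ F * A` for some `x`, so by pigeonhole some `f ∈ F` satisfies `|K| ≤ k |f⁻¹ K x ∩ A|`.
The set `f⁻¹ K x` is `(H, ε)`-invariant because `h f⁻¹ K x = f⁻¹ (f h f⁻¹) K x`. Hence `1 / k` itself,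
with no loss in the limit, belongs to the set whose supremum is the Banach density.
-/

open scoped Pointwise symmDiff

variable {G : Type*}

/-- `K` is a nonempty finite `(H, ε)`-invariant set: `|hK ∆ K| < ε|K|` for all `h ∈ H`. -/
def IsFolnerInvariant [Group G] [DecidableEq G] (H : Finset G) (ε : ℝ) (K : Finset G) : Prop :=
  K.Nonempty ∧ ∀ h ∈ H, (((K.image (h * ·)) ∆ K).card : ℝ) < ε * K.card

/-- Følner's condition: for every finite `H ⊆ G` and `ε > 0` there is a nonempty finite
`(H, ε)`-invariant set. -/
def IsAmenable (G : Type*) [Group G] [DecidableEq G] : Prop :=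
  ∀ (H : Finset G) (ε : ℝ), 0 < ε → ∃ K : Finset G, IsFolnerInvariant H ε K

/-- The (upper) Banach density of `A ⊆ G`: the least upper bound of the `α` such that for every
finite `H ⊆ G` and every `ε > 0` some nonempty finite `(H, ε)`-invariant `K` satisfies
`|A ∩ K|/|K| ≥ α`. -/
noncomputable def banachDensity [Group G] [DecidableEq G] (A : Set G) : ℝ :=
  sSup {α : ℝ | ∀ (H : Finset G) (ε : ℝ), 0 < ε →
    ∃ K : Finset G, IsFolnerInvariant H ε K ∧ α ≤ ((A ∩ ↑K).ncard : ℝ) / K.card}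

/-- The lower Banach density of `A ⊆ G`: the least upper bound of the `α` such that for some
finite `H ⊆ G` and some `ε > 0` every nonempty finite `(H, ε)`-invariant `K` satisfies
`|A ∩ K|/|K| ≥ α`. -/
noncomputable def lowerBanachDensity [Group G] [DecidableEq G] (A : Set G) : ℝ :=
  sSup {α : ℝ | ∃ (H : Finset G) (ε : ℝ), 0 < ε ∧
    ∀ K : Finset G, IsFolnerInvariant H ε K → α ≤ ((A ∩ ↑K).ncard : ℝ) / K.card}

/-- The `ε`-density Delta-set `Δ_ε(A) = {g ∈ G : d(A ∩ gA) > ε}`. -/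
noncomputable def deltaSet [Group G] [DecidableEq G] (ε : ℝ) (A : Set G) : Set G :=
  {g | ε < banachDensity (A ∩ (g * ·) '' A)}

/-- `S ⊆ G` is thick if every finite subset of `G` has a right translate inside `S`. -/
def Thick [Group G] (S : Set G) : Prop :=
  ∀ H : Finset G, ∃ x : G, ∀ h ∈ H, h * x ∈ S

/-- `S ⊆ G` is `k`-syndetic if `G = F·S` for some finite `F` with `|F| ≤ k`. -/
def IsSyndetic [Group G] (k : ℕ) (S : Set G) : Prop :=
  ∃ F : Finset G, F.card ≤ k ∧ ∀ g : G, g ∈ (↑F : Set G) * S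

/-- `S ⊆ G` is piecewise `k`-syndetic if `F·S` is thick for some finite `F` with `|F| ≤ k`. -/
def PiecewiseSyndetic [Group G] (k : ℕ) (S : Set G) : Prop :=
  ∃ F : Finset G, F.card ≤ k ∧ Thick ((↑F : Set G) * S)

/-- `A` is finitely embeddable in `B` (`A ◁ B`): every finite subset of `A` has a right
translate contained in `B`. -/
def FinEmbeddable [Group G] (A B : Set G) : Prop :=
  ∀ H : Finset G, ↑H ⊆ A → ∃ x : G, ∀ h ∈ H, h * x ∈ B

/-- A two-sided translate `f⁻¹ K x` of an invariant set is invariant, up to conjugation by `f` of the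
set of translating elements. -/
lemma IsFolnerInvariant.translate {G : Type*} [Group G] [DecidableEq G] {H H' K : Finset G}
    {ε : ℝ} (hK : IsFolnerInvariant H' ε K) (f x : G) (hH : ∀ h ∈ H, f * h * f⁻¹ ∈ H') :
    IsFolnerInvariant H ε (K.image fun g => f⁻¹ * g * x) := by
  have hinj : Function.Injective fun g : G => f⁻¹ * g * x := fun a b hab => by simpa using hab
  refine ⟨hK.1.image _, fun h hh => ?_⟩
  have key : (K.image fun g => f⁻¹ * g * x).image (h * ·)
      = (K.image (f * h * f⁻¹ * ·)).image fun g => f⁻¹ * g * x := by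
    rw [Finset.image_image, Finset.image_image]
    congr 1
    funext g
    simp [mul_assoc]
  rw [key, ← Finset.image_symmDiff _ _ hinj, Finset.card_image_of_injective _ hinj,
    Finset.card_image_of_injective _ hinj]
  exact hK.2 _ (hH h hh)

/-- Pigeonhole: if `K x ⊆ F * A` with `|F| ≤ k`, then some `f⁻¹ K x`, `f ∈ F`, meets `A` in at least
`|K| / k` elements, which are counted here through their preimages in `K`. -/
lemma exists_card_le_mul_card_filter {G : Type*} [Group G] [DecidableEq G] {k : ℕ} {A : Set G}
    [DecidablePred (· ∈ A)] {F K : Finset G} (hF : F.card ≤ k) (hK : K.Nonempty) {x : G}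
    (hx : ∀ g ∈ K, g * x ∈ (↑F : Set G) * A) :
    ∃ f ∈ F, K.card ≤ k * (K.filter fun g => f⁻¹ * g * x ∈ A).card := by
  have hcover : K ⊆ F.biUnion fun f => K.filter fun g => f⁻¹ * g * x ∈ A := by
    intro g hg
    obtain ⟨f, hf, a, ha, hfa⟩ := Set.mem_mul.1 (hx g hg)
    refine Finset.mem_biUnion.2 ⟨f, hf, Finset.mem_filter.2 ⟨hg, ?_⟩⟩
    rwa [mul_assoc, ← hfa, inv_mul_cancel_left]
  have hFne : F.Nonempty := by
    obtain ⟨g, hg⟩ := hK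
    obtain ⟨f, hf, -⟩ := Finset.mem_biUnion.1 (hcover hg)
    exact ⟨f, hf⟩
  have hsum := (Finset.card_le_card hcover).trans Finset.card_biUnion_le
  refine Finset.exists_le_of_sum_le hFne ?_
  rw [Finset.sum_const, smul_eq_mul, ← Finset.mul_sum]
  exact Nat.mul_le_mul hF hsum

/-- The set whose supremum is the Banach density is bounded above by `1`, so that this supremum does
not take a junk value. -/
lemma bddAbove_banachDensity_set {G : Type*} [Group G] [DecidableEq G] (A : Set G) :
    BddAbove {α : ℝ | ∀ (H : Finset G) (ε : ℝ), 0 < ε →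
      ∃ K : Finset G, IsFolnerInvariant H ε K ∧ α ≤ ((A ∩ ↑K).ncard : ℝ) / K.card} := by
  refine ⟨1, fun α hα => ?_⟩
  obtain ⟨K, -, hle⟩ := hα ∅ 1 one_pos
  refine hle.trans (div_le_one_of_le₀ ?_ (Nat.cast_nonneg _))
  have := Set.ncard_le_ncard (s := A ∩ ↑K) (t := ↑K) Set.inter_subset_right K.finite_toSet
  rw [Set.ncard_coe_finset] at this
  exact_mod_cast this

/-- If `A` is piecewise `k`-syndetic in an amenable group, then `d(A) ≥ 1/k`. -/
theorem stmt13 {G : Type*} [Group G] [DecidableEq G] (hG : IsAmenable G)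
    (k : ℕ) (hk : 0 < k) (A : Set G) (h : PiecewiseSyndetic k A) :
    1 / (k : ℝ) ≤ banachDensity A := by
  classical
  obtain ⟨F, hFk, hthick⟩ := h
  refine le_csSup (bddAbove_banachDensity_set A) fun H ε hε => ?_
  obtain ⟨K, hK⟩ := hG (F.biUnion fun f => H.image fun h => f * h * f⁻¹) ε hε
  obtain ⟨x, hx⟩ := hthick K
  obtain ⟨f, hf, hcard⟩ := exists_card_le_mul_card_filter hFk hK.1 hx
  have hinj : Function.Injective fun g : G => f⁻¹ * g * x := fun a b hab => by simpa using hab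
  refine ⟨K.image fun g => f⁻¹ * g * x, hK.translate f x fun h hh =>
    Finset.mem_biUnion.2 ⟨f, hf, Finset.mem_image_of_mem _ hh⟩, ?_⟩
  have hset : A ∩ ↑(K.image fun g => f⁻¹ * g * x)
      = ↑((K.filter fun g => f⁻¹ * g * x ∈ A).image fun g => f⁻¹ * g * x) := by
    ext y
    simp only [Set.mem_inter_iff, Finset.mem_coe, Finset.mem_image, Finset.mem_filter]
    constructor
    · rintro ⟨hy, g, hg, rfl⟩
      exact ⟨g, ⟨hg, hy⟩, rfl⟩
    · rintro ⟨g, ⟨hg, hy⟩, rfl⟩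
      exact ⟨hy, g, hg, rfl⟩
  rw [hset, Set.ncard_coe_finset, Finset.card_image_of_injective _ hinj,
    Finset.card_image_of_injective _ hinj,
    div_le_div_iff₀ (by exact_mod_cast hk) (by exact_mod_cast hK.1.card_pos), one_mul, mul_comm]
  exact_mod_cast hcard
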